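/- A minimal Lorentzian surface with pointwise 1-type Gauss map has it of the first kind (Proposition 3.3): in the setting of a minimal Lorentzian surface x(s,t) = α(s) + β(t) in null coordinates with I₁ × I₂ connected, suppose there exist a smooth function f : I₁ × I₂ → ℝ and a constant bivector C ∈ Λ²(ℝ⁴) such that Δν = f·(ν + C) at every point, where Δν := (2/m²)·∂²ν/∂s∂t. Then η₁ ∧ η₂ vanishes identically on I₁ × I₂; equivalently, ∂²ν/∂s∂t (s,t) is a scalar multiple of ν(s,t) at every point, so the Gauss map is of pointwise 1-type of the first kind (the constant vector C may be taken to be 0). -/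

import Mathlib

noncomputable section

/-- The Minkowski bilinear form on `ℝ⁴ = Fin 4 → ℝ`:
`B(v,w) = -v₀w₀ + v₁w₁ + v₂w₂ + v₃w₃`. -/
def B4 (v w : Fin 4 → ℝ) : ℝ :=
  -(v 0 * w 0) + v 1 * w 1 + v 2 * w 2 + v 3 * w 3

/-- The wedge product `v ∧ w`, modelled concretely as the antisymmetric array
`(i,j) ↦ vᵢwⱼ - vⱼwᵢ` (a faithful model of the second exterior power `Λ²(ℝ⁴)`). -/
def wedge (v w : Fin 4 → ℝ) : Fin 4 → Fin 4 → ℝ :=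
  fun i j => v i * w j - v j * w i

/-- Partial derivative of a two-parameter map with respect to the first variable. -/
def pds {E : Type*} [NormedAddCommGroup E] [NormedSpace ℝ E]
    (x : ℝ → ℝ → E) (s t : ℝ) : E :=
  deriv (fun u => x u t) s

/-- Partial derivative of a two-parameter map with respect to the second variable. -/
def pdt {E : Type*} [NormedAddCommGroup E] [NormedSpace ℝ E]
    (x : ℝ → ℝ → E) (s t : ℝ) : E :=
  deriv (fun u => x s u) t

/-- `m²(s,t) = -B(α'(s), β'(t))`, the conformal factor of the induced metric
`-m²(ds⊗dt + dt⊗ds)` of the minimal Lorentzian surface `x(s,t) = α(s) + β(t)`. -/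
def msq (α β : ℝ → Fin 4 → ℝ) (s t : ℝ) : ℝ :=
  -B4 (deriv α s) (deriv β t)

/-- `η₁ = h(∂s,∂s)`: the component of `x_{ss} = α''` orthogonal to the tangent
plane `span{α'(s), β'(t)}`. -/
def eta1 (α β : ℝ → Fin 4 → ℝ) (s t : ℝ) : Fin 4 → ℝ :=
  deriv (deriv α) s
    - (B4 (deriv (deriv α) s) (deriv β t) / B4 (deriv α s) (deriv β t)) • deriv α s

/-- `η₂ = h(∂t,∂t)`: the component of `x_{tt} = β''` orthogonal to the tangent
plane `span{α'(s), β'(t)}`. -/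
def eta2 (α β : ℝ → Fin 4 → ℝ) (s t : ℝ) : Fin 4 → ℝ :=
  deriv (deriv β) t
    - (B4 (deriv (deriv β) t) (deriv α s) / B4 (deriv α s) (deriv β t)) • deriv β t

/-- The Gauss map `ν = (1/m²)·(α'(s) ∧ β'(t))`, valued in (a model of) `Λ²(ℝ⁴)`. -/
def gaussMap (α β : ℝ → Fin 4 → ℝ) (s t : ℝ) : Fin 4 → Fin 4 → ℝ :=
  (1 / msq α β s t) • wedge (deriv α s) (deriv β t)

/-- The Laplace–Beltrami operator of the induced metric `-m²(ds⊗dt + dt⊗ds)`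
(with the sign convention of the paper) acting on `Λ²(ℝ⁴)`-valued maps:
`Δξ = (2/m²)·∂²ξ/∂s∂t`. -/
def lap (α β : ℝ → Fin 4 → ℝ) (ξ : ℝ → ℝ → (Fin 4 → Fin 4 → ℝ)) (s t : ℝ) :
    Fin 4 → Fin 4 → ℝ :=
  (2 / msq α β s t) • pds (pdt ξ) s t

/-!
Write `η₁`, `η₂` for the normal components of `x_ss` and `x_tt`. Then
`∂²ν/∂s∂t = m⁻² (η₁ ∧ η₂ + B(η₁, η₂) ν)`. Suppose that `Δν = f (ν + C)` but `η₁ ∧ η₂ ≠ 0` at some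
`(s, t)`. By continuity `η₁ ∧ η₂ ≠ 0` at `(u, t)` for all `u` near `s`; there `f ≠ 0`, so that `C`
is a combination of `η₁ ∧ η₂`, with nonzero coefficient, and `α' ∧ β'`. Read as an endomorphism of
`ℝ⁴` by contraction with `B`, the bivector `C` thus has `α'(u)` as an eigenvector for all `u` near
`s`. Differentiating `C α' ∧ α' = 0` shows that `C η₁ - μ η₁` is a multiple of `α'`, where
`C α' = μ α'`; it is also orthogonal to `β'`, hence zero. But the coefficient of `η₂` in `C η₁` is
a nonzero multiple of `B(η₁, η₁)`, which is positive because the normal plane is spacelike. So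
`η₂` is a multiple of `η₁`, a contradiction.
-/

open Filter Topology

section QuotientRule

variable {𝕜 E : Type*} [NontriviallyNormedField 𝕜] [NormedAddCommGroup E] [NormedSpace 𝕜 E]

lemma hasDerivAt_one_div_neg_smul {φ : 𝕜 → 𝕜} {w : 𝕜 → E} {φ' : 𝕜} {w' : E} {t : 𝕜}
    (hφ : HasDerivAt φ φ' t) (hw : HasDerivAt w w' t) (h0 : φ t ≠ 0) :
    HasDerivAt (fun u => (1 / -φ u) • w u) ((1 / -φ t) • (w' - (φ' / φ t) • w t)) t := by
  have hinv : HasDerivAt (fun u => 1 / -φ u) (φ' / φ t ^ 2) t := by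
    simpa [one_div] using hφ.fun_neg.fun_inv (neg_ne_zero.2 h0)
  refine (hinv.fun_smul hw).congr_deriv ?_
  match_scalars <;> field_simp

end QuotientRule

section MinkowskiForm

variable {a b v w x : Fin 4 → ℝ}

lemma isBilinearMap_B4 : IsBilinearMap ℝ B4 where
  add_left _ _ _ := by simp only [B4, Pi.add_apply]; ring
  smul_left _ _ _ := by simp only [B4, Pi.smul_apply, smul_eq_mul]; ring
  add_right _ _ _ := by simp only [B4, Pi.add_apply]; ring
  smul_right _ _ _ := by simp only [B4, Pi.smul_apply, smul_eq_mul]; ring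

lemma B4_comm (v w : Fin 4 → ℝ) : B4 v w = B4 w v := by
  simp only [B4]; ring

lemma B4_sub_smul_left (v w z : Fin 4 → ℝ) (c : ℝ) :
    B4 (v - c • w) z = B4 v z - c * B4 w z := by
  simp only [B4, Pi.sub_apply, Pi.smul_apply, smul_eq_mul]; ring

lemma B4_sub_smul_right (v w z : Fin 4 → ℝ) (c : ℝ) :
    B4 z (v - c • w) = B4 z v - c * B4 z w := by
  simp only [B4_comm z, B4_sub_smul_left]

lemma continuousAt_B4_const_right {X : Type*} [TopologicalSpace X] (w : Fin 4 → ℝ)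
    {v : X → Fin 4 → ℝ} {s : X} (hv : ContinuousAt v s) :
    ContinuousAt (fun u => B4 (v u) w) s :=
  (isBilinearMap_B4.toContinuousBilinearMap.flip w).continuous.continuousAt.comp hv

lemma hasDerivAt_B4 {v w : ℝ → Fin 4 → ℝ} {v' w' : Fin 4 → ℝ} {s : ℝ}
    (hv : HasDerivAt v v' s) (hw : HasDerivAt w w' s) :
    HasDerivAt (fun u => B4 (v u) (w u)) (B4 (v s) w' + B4 v' (w s)) s :=
  isBilinearMap_B4.toContinuousBilinearMap.hasDerivAt_of_bilinear (fun _ => hv) fun _ => hw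

lemma hasDerivAt_B4_const_left (w : Fin 4 → ℝ) {v : ℝ → Fin 4 → ℝ} {v' : Fin 4 → ℝ} {s : ℝ}
    (hv : HasDerivAt v v' s) : HasDerivAt (fun u => B4 w (v u)) (B4 w v') s :=
  (isBilinearMap_B4.toContinuousBilinearMap w).hasFDerivAt.comp_hasDerivAt s hv

lemma hasDerivAt_B4_const_right (w : Fin 4 → ℝ) {v : ℝ → Fin 4 → ℝ} {v' : Fin 4 → ℝ} {s : ℝ}
    (hv : HasDerivAt v v' s) : HasDerivAt (fun u => B4 (v u) w) (B4 v' w) s := by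
  simpa only [B4_comm _ w] using hasDerivAt_B4_const_left w hv

lemma B4_deriv_self_eq_zero {v : ℝ → Fin 4 → ℝ} {s c : ℝ} (hv : DifferentiableAt ℝ v s)
    (hc : ∀ᶠ u in 𝓝 s, B4 (v u) (v u) = c) : B4 (deriv v s) (v s) = 0 := by
  have hsum := (hasDerivAt_B4 hv.hasDerivAt hv.hasDerivAt).unique
    ((hasDerivAt_const s c).congr_of_eventuallyEq hc)
  rw [B4_comm (v s)] at hsum
  linarith

lemma B4_self_pos_of_orthogonal_timelike (hw : B4 w w < 0) (hxw : B4 x w = 0) (hx : x ≠ 0) :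
    0 < B4 x x := by
  by_contra! hxx
  have cauchy_schwarz : (x 1 * w 1 + x 2 * w 2 + x 3 * w 3) ^ 2 ≤
      (x 1 ^ 2 + x 2 ^ 2 + x 3 ^ 2) * (w 1 ^ 2 + w 2 ^ 2 + w 3 ^ 2) := by
    simpa [Fin.sum_univ_three] using
      Finset.sum_mul_sq_le_sq_mul_sq Finset.univ (fun i : Fin 3 => x i.succ) (fun i => w i.succ)
  simp only [B4] at hw hxw hxx
  have hdot : x 1 * w 1 + x 2 * w 2 + x 3 * w 3 = x 0 * w 0 := by linarith
  rw [hdot] at cauchy_schwarz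
  have hx0 : x 0 = 0 := by
    by_contra h
    have : 0 < x 0 ^ 2 := by positivity
    nlinarith [mul_nonneg (add_nonneg (add_nonneg (sq_nonneg (w 1)) (sq_nonneg (w 2)))
      (sq_nonneg (w 3))) (sub_nonneg.2 hxx)]
  rw [hx0] at hxx
  obtain ⟨hx1, hx2, hx3⟩ : x 1 = 0 ∧ x 2 = 0 ∧ x 3 = 0 := by
    refine ⟨?_, ?_, ?_⟩ <;> nlinarith [sq_nonneg (x 1), sq_nonneg (x 2), sq_nonneg (x 3)]
  exact hx (by ext i; fin_cases i <;> assumption)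

lemma B4_self_pos_of_orthogonal_null_pair (ha : B4 a a = 0) (hb : B4 b b = 0)
    (hab : B4 a b ≠ 0) (hxa : B4 x a = 0) (hxb : B4 x b = 0) (hx : x ≠ 0) : 0 < B4 x x := by
  have hxw : B4 x (a - B4 a b • b) = 0 := by rw [B4_sub_smul_right, hxa, hxb]; ring
  refine B4_self_pos_of_orthogonal_timelike ?_ hxw hx
  calc B4 (a - B4 a b • b) (a - B4 a b • b) = -2 * B4 a b ^ 2 := by
        simp only [B4_sub_smul_left, B4_sub_smul_right, ha, hb, B4_comm b a]; ring
    _ < 0 := by have := sq_pos_of_ne_zero hab; linarith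

end MinkowskiForm

section Bivectors

variable {a b x y : Fin 4 → ℝ}

lemma isBilinearMap_wedge : IsBilinearMap ℝ wedge where
  add_left _ _ _ := by ext; simp only [wedge, Pi.add_apply]; ring
  smul_left _ _ _ := by ext; simp only [wedge, Pi.smul_apply, smul_eq_mul]; ring
  add_right _ _ _ := by ext; simp only [wedge, Pi.add_apply]; ring
  smul_right _ _ _ := by ext; simp only [wedge, Pi.smul_apply, smul_eq_mul]; ring

lemma wedge_smul_self (c : ℝ) (x : Fin 4 → ℝ) : wedge (c • x) x = 0 := by
  ext; simp only [wedge, Pi.smul_apply, smul_eq_mul, Pi.zero_apply]; ring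

lemma hasDerivAt_wedge {v w : ℝ → Fin 4 → ℝ} {v' w' : Fin 4 → ℝ} {s : ℝ}
    (hv : HasDerivAt v v' s) (hw : HasDerivAt w w' s) :
    HasDerivAt (fun u => wedge (v u) (w u)) (wedge (v s) w' + wedge v' (w s)) s :=
  isBilinearMap_wedge.toContinuousBilinearMap.hasDerivAt_of_bilinear (fun _ => hv) fun _ => hw

lemma continuousAt_wedge {X : Type*} [TopologicalSpace X] {v w : X → Fin 4 → ℝ} {s : X}
    (hv : ContinuousAt v s) (hw : ContinuousAt w s) :
    ContinuousAt (fun u => wedge (v u) (w u)) s :=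
  (isBilinearMap_wedge.toContinuousBilinearMap.continuous.continuousAt.comp hv).clm_apply hw

lemma isBilinearMap_B4_row :
    IsBilinearMap ℝ fun (C : Fin 4 → Fin 4 → ℝ) (v : Fin 4 → ℝ) i => B4 (C i) v where
  add_left _ _ _ := funext fun _ => isBilinearMap_B4.add_left _ _ _
  smul_left _ _ _ := funext fun _ => isBilinearMap_B4.smul_left _ _ _
  add_right _ _ _ := funext fun _ => isBilinearMap_B4.add_right _ _ _
  smul_right _ _ _ := funext fun _ => isBilinearMap_B4.smul_right _ _ _

/-- The contraction `(C, v) ↦ C ⌟ v` of a bivector with a vector by means of the Minkowski form.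
It turns a bivector into an endomorphism of `ℝ⁴`, so that one can speak of its eigenvectors. -/
def contraction : (Fin 4 → Fin 4 → ℝ) →L[ℝ] (Fin 4 → ℝ) →L[ℝ] Fin 4 → ℝ :=
  isBilinearMap_B4_row.toContinuousBilinearMap

lemma contraction_apply (C : Fin 4 → Fin 4 → ℝ) (v : Fin 4 → ℝ) (i : Fin 4) :
    contraction C v i = B4 (C i) v := rfl

lemma contraction_wedge (x y v : Fin 4 → ℝ) :
    contraction (wedge x y) v = B4 y v • x - B4 x v • y := by
  ext i
  simp only [contraction_apply, B4, wedge, Pi.sub_apply, Pi.smul_apply, smul_eq_mul]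
  ring

lemma eq_zero_of_wedge_eq_zero (hab : B4 a b ≠ 0) (hxb : B4 x b = 0) (h : wedge x a = 0) :
    x = 0 := by
  have hcontr := contraction_wedge x a b
  rw [h, hxb, map_zero, zero_apply, zero_smul, sub_zero] at hcontr
  exact (smul_eq_zero.1 hcontr.symm).resolve_left hab

lemma wedge_eq_zero_of_smul_eq_smul {p q : ℝ} (hq : q ≠ 0) (h : p • x = q • y) :
    wedge x y = 0 := by
  have hy : y = (q⁻¹ * p) • x := by rw [mul_smul, h, inv_smul_smul₀ hq]
  ext; simp only [hy, wedge, Pi.smul_apply, smul_eq_mul, Pi.zero_apply]; ring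

lemma contraction_wedge_add_wedge_of_null (k l : ℝ) (ha : B4 a a = 0) (hxa : B4 x a = 0)
    (hya : B4 y a = 0) :
    contraction (k • wedge x y + l • wedge a b) a = (l * B4 b a) • a := by
  simp only [map_add, map_smul, add_apply, smul_apply,
    contraction_wedge, ha, hxa, hya]
  module

lemma contraction_wedge_add_wedge_of_normal (k l : ℝ) (hxa : B4 x a = 0) (hxb : B4 x b = 0) :
    contraction (k • wedge x y + l • wedge a b) x =
      k • (B4 x y • x - B4 x x • y) := by
  simp only [map_add, map_smul, add_apply, smul_apply,
    contraction_wedge, B4_comm a x, B4_comm b x, B4_comm y x, hxa, hxb]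
  module

lemma wedge_eq_zero_of_contraction_eq_smul {k l μ : ℝ} (hk : k ≠ 0)
    (ha : B4 a a = 0) (hb : B4 b b = 0) (hab : B4 a b ≠ 0)
    (hxa : B4 x a = 0) (hxb : B4 x b = 0)
    (h : contraction (k • wedge x y + l • wedge a b) x = μ • x) : wedge x y = 0 := by
  rcases eq_or_ne x 0 with rfl | hx
  · simpa using wedge_smul_self 0 y
  have hxx := B4_self_pos_of_orthogonal_null_pair ha hb hab hxa hxb hx
  rw [contraction_wedge_add_wedge_of_normal k l hxa hxb] at h
  refine wedge_eq_zero_of_smul_eq_smul (p := k * B4 x y - μ) (mul_ne_zero hk hxx.ne') ?_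
  rw [sub_smul, ← h]
  module

end Bivectors

section Eigendirections

variable {T : (Fin 4 → ℝ) →L[ℝ] (Fin 4 → ℝ)} {v : ℝ → Fin 4 → ℝ} {v' : Fin 4 → ℝ} {s μ : ℝ}

lemma wedge_apply_deriv_sub_smul_eq_zero (hv : HasDerivAt v v' s)
    (heig : ∀ᶠ u in 𝓝 s, ∃ c : ℝ, T (v u) = c • v u) (hμ : T (v s) = μ • v s) :
    wedge (T v' - μ • v') (v s) = 0 := by
  have hzero : ∀ᶠ u in 𝓝 s, wedge (T (v u)) (v u) = 0 :=
    heig.mono fun u ⟨c, hc⟩ => by rw [hc, wedge_smul_self]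
  have hderiv := (hasDerivAt_wedge (T.hasFDerivAt.comp_hasDerivAt s hv) hv).unique
    ((hasDerivAt_const s 0).congr_of_eventuallyEq hzero)
  rw [Function.comp_apply, hμ] at hderiv
  rw [← hderiv]
  ext; simp only [wedge, Pi.sub_apply, Pi.add_apply, Pi.smul_apply, smul_eq_mul]; ring

lemma apply_eq_smul_of_eigendirections (hv : HasDerivAt v v' s)
    (heig : ∀ᶠ u in 𝓝 s, ∃ c : ℝ, T (v u) = c • v u) (hμ : T (v s) = μ • v s)
    {b : Fin 4 → ℝ} (hvb : B4 (v s) b ≠ 0) {p : ℝ} (hxb : B4 (v' - p • v s) b = 0)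
    (hTxb : B4 (T (v' - p • v s)) b = 0) : T (v' - p • v s) = μ • (v' - p • v s) := by
  refine sub_eq_zero.1 (eq_zero_of_wedge_eq_zero hvb ?_ ?_)
  · rw [B4_sub_smul_left, hTxb, hxb]; ring
  · have hT : T (v' - p • v s) - μ • (v' - p • v s) = T v' - μ • v' := by
      rw [map_sub, map_smul, hμ]; module
    rw [hT, wedge_apply_deriv_sub_smul_eq_zero hv heig hμ]

end Eigendirections

section GaussMap

variable {α β : ℝ → Fin 4 → ℝ} {s t : ℝ}

lemma eta2_eq_eta1_swap (α β : ℝ → Fin 4 → ℝ) (s t : ℝ) : eta2 α β s t = eta1 β α t s := by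
  rw [eta1, eta2, B4_comm (deriv α s) (deriv β t)]

lemma B4_eta1_deriv_right (hg : B4 (deriv α s) (deriv β t) ≠ 0) :
    B4 (eta1 α β s t) (deriv β t) = 0 := by
  rw [eta1, B4_sub_smul_left, div_mul_cancel₀ _ hg, sub_self]

lemma pdt_gaussMap (hβ : DifferentiableAt ℝ (deriv β) t)
    (hg : B4 (deriv α s) (deriv β t) ≠ 0) :
    pdt (gaussMap α β) s t = (1 / msq α β s t) • wedge (deriv α s) (eta2 α β s t) := by
  have hderiv := hasDerivAt_one_div_neg_smul
    (hasDerivAt_B4_const_left (deriv α s) hβ.hasDerivAt)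
    (hasDerivAt_wedge (hasDerivAt_const t (deriv α s)) hβ.hasDerivAt) hg
  refine hderiv.deriv.trans ?_
  rw [msq, eta2, B4_comm (deriv (deriv β) t)]
  congr 1
  ext
  simp only [wedge, Pi.sub_apply, Pi.add_apply, Pi.smul_apply, Pi.zero_apply, smul_eq_mul]
  ring

lemma hasDerivAt_eta2_left (hα : DifferentiableAt ℝ (deriv α) s)
    (hg : B4 (deriv α s) (deriv β t) ≠ 0) :
    HasDerivAt (fun u => eta2 α β u t)
      ((B4 (eta1 α β s t) (eta2 α β s t) / msq α β s t) • deriv β t) s := by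
  have hnum := hasDerivAt_B4_const_left (deriv (deriv β) t) hα.hasDerivAt
  have hden := hasDerivAt_B4_const_right (deriv β t) hα.hasDerivAt
  refine (((hnum.fun_div hden hg).smul_const (deriv β t)).const_sub _).congr_deriv ?_
  rw [eta2, B4_sub_smul_right, B4_eta1_deriv_right hg, eta1, B4_sub_smul_left, msq,
    B4_comm _ (deriv α s), B4_comm _ (deriv (deriv α) s), ← neg_smul]
  congr 1
  field_simp
  ring

lemma pds_pdt_gaussMap (hα : DifferentiableAt ℝ (deriv α) s)
    (hβ : DifferentiableAt ℝ (deriv β) t)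
    (hg : ∀ᶠ u in 𝓝 s, B4 (deriv α u) (deriv β t) ≠ 0) :
    pds (pdt (gaussMap α β)) s t =
      (1 / msq α β s t) • wedge (eta1 α β s t) (eta2 α β s t) +
        (B4 (eta1 α β s t) (eta2 α β s t) / msq α β s t) • gaussMap α β s t := by
  have hpdt : (fun u => pdt (gaussMap α β) u t) =ᶠ[𝓝 s]
      fun u => (1 / msq α β u t) • wedge (deriv α u) (eta2 α β u t) :=
    hg.mono fun u hu => pdt_gaussMap hβ hu
  have hderiv := hasDerivAt_one_div_neg_smul
    (hasDerivAt_B4_const_right (deriv β t) hα.hasDerivAt)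
    (hasDerivAt_wedge hα.hasDerivAt (hasDerivAt_eta2_left hα hg.self_of_nhds)) hg.self_of_nhds
  refine hpdt.deriv_eq.trans (hderiv.deriv.trans ?_)
  rw [gaussMap, msq]
  generalize B4 (eta1 α β s t) (eta2 α β s t) / _ = κ
  generalize eta2 α β s t = η₂
  ext
  simp only [eta1, wedge, Pi.sub_apply, Pi.add_apply, Pi.smul_apply, smul_eq_mul]
  ring

end GaussMap

/-- The curves `α` and `β` generate a minimal Lorentzian surface `x(s,t) = α(s) + β(t)` in null
coordinates over `I₁ × I₂`, with induced metric `-m²(ds⊗dt + dt⊗ds)`. It is encoded by `C²` curves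
over arbitrary open parameter sets. -/
structure IsMinimalLorentzianSurface (I₁ I₂ : Set ℝ) (α β : ℝ → Fin 4 → ℝ) : Prop where
  isOpen_left : IsOpen I₁
  isOpen_right : IsOpen I₂
  contDiffOn_left : ContDiffOn ℝ 2 α I₁
  contDiffOn_right : ContDiffOn ℝ 2 β I₂
  null_left : ∀ s ∈ I₁, B4 (deriv α s) (deriv α s) = 0
  null_right : ∀ t ∈ I₂, B4 (deriv β t) (deriv β t) = 0
  B4_deriv_neg : ∀ s ∈ I₁, ∀ t ∈ I₂, B4 (deriv α s) (deriv β t) < 0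

namespace IsMinimalLorentzianSurface

variable {I₁ I₂ : Set ℝ} {α β : ℝ → Fin 4 → ℝ} {s t : ℝ}

lemma swap (h : IsMinimalLorentzianSurface I₁ I₂ α β) :
    IsMinimalLorentzianSurface I₂ I₁ β α where
  isOpen_left := h.isOpen_right
  isOpen_right := h.isOpen_left
  contDiffOn_left := h.contDiffOn_right
  contDiffOn_right := h.contDiffOn_left
  null_left := h.null_right
  null_right := h.null_left
  B4_deriv_neg t ht s hs := by simpa only [B4_comm] using h.B4_deriv_neg s hs t ht

lemma B4_deriv_ne_zero (h : IsMinimalLorentzianSurface I₁ I₂ α β) (hs : s ∈ I₁) (ht : t ∈ I₂) :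
    B4 (deriv α s) (deriv β t) ≠ 0 :=
  (h.B4_deriv_neg s hs t ht).ne

lemma msq_ne_zero (h : IsMinimalLorentzianSurface I₁ I₂ α β) (hs : s ∈ I₁) (ht : t ∈ I₂) :
    msq α β s t ≠ 0 :=
  neg_ne_zero.2 (h.B4_deriv_ne_zero hs ht)

lemma contDiffOn_deriv_left (h : IsMinimalLorentzianSurface I₁ I₂ α β) :
    ContDiffOn ℝ 1 (deriv α) I₁ :=
  h.contDiffOn_left.deriv_of_isOpen h.isOpen_left (by norm_num)

lemma differentiableAt_deriv_left (h : IsMinimalLorentzianSurface I₁ I₂ α β) (hs : s ∈ I₁) :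
    DifferentiableAt ℝ (deriv α) s :=
  (h.contDiffOn_deriv_left.differentiableOn one_ne_zero).differentiableAt
    (h.isOpen_left.mem_nhds hs)

lemma continuousAt_deriv_deriv_left (h : IsMinimalLorentzianSurface I₁ I₂ α β) (hs : s ∈ I₁) :
    ContinuousAt (deriv (deriv α)) s :=
  (h.contDiffOn_deriv_left.continuousOn_deriv_of_isOpen h.isOpen_left le_rfl).continuousAt
    (h.isOpen_left.mem_nhds hs)

lemma B4_eta1_deriv_left (h : IsMinimalLorentzianSurface I₁ I₂ α β) (hs : s ∈ I₁) :
    B4 (eta1 α β s t) (deriv α s) = 0 := by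
  have hnull : ∀ᶠ u in 𝓝 s, B4 (deriv α u) (deriv α u) = 0 :=
    (h.isOpen_left.eventually_mem hs).mono h.null_left
  rw [eta1, B4_sub_smul_left, B4_deriv_self_eq_zero (h.differentiableAt_deriv_left hs) hnull,
    h.null_left s hs]
  ring

lemma B4_eta2_deriv_left (h : IsMinimalLorentzianSurface I₁ I₂ α β) (hs : s ∈ I₁) (ht : t ∈ I₂) :
    B4 (eta2 α β s t) (deriv α s) = 0 :=
  eta2_eq_eta1_swap α β s t ▸ B4_eta1_deriv_right (h.swap.B4_deriv_ne_zero ht hs)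

lemma B4_eta2_deriv_right (h : IsMinimalLorentzianSurface I₁ I₂ α β) (ht : t ∈ I₂) :
    B4 (eta2 α β s t) (deriv β t) = 0 :=
  eta2_eq_eta1_swap α β s t ▸ h.swap.B4_eta1_deriv_left ht

lemma continuousAt_wedge_eta (h : IsMinimalLorentzianSurface I₁ I₂ α β)
    (hs : s ∈ I₁) (ht : t ∈ I₂) :
    ContinuousAt (fun u => wedge (eta1 α β u t) (eta2 α β u t)) s := by
  have hα' := h.differentiableAt_deriv_left hs
  have hg := h.B4_deriv_ne_zero hs ht
  have hη₁ : ContinuousAt (fun u => eta1 α β u t) s := by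
    have hα'' := h.continuousAt_deriv_deriv_left hs
    have hnum := continuousAt_B4_const_right (deriv β t) hα''
    have hden := continuousAt_B4_const_right (deriv β t) hα'.continuousAt
    exact hα''.sub ((hnum.div hden hg).smul hα'.continuousAt)
  exact continuousAt_wedge hη₁ (hasDerivAt_eta2_left hα' hg).continuousAt

protected lemma pds_pdt_gaussMap (h : IsMinimalLorentzianSurface I₁ I₂ α β)
    (hs : s ∈ I₁) (ht : t ∈ I₂) :
    pds (pdt (gaussMap α β)) s t =
      (1 / msq α β s t) • wedge (eta1 α β s t) (eta2 α β s t) +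
        (B4 (eta1 α β s t) (eta2 α β s t) / msq α β s t) • gaussMap α β s t :=
  pds_pdt_gaussMap (h.differentiableAt_deriv_left hs) (h.swap.differentiableAt_deriv_left ht)
    ((h.isOpen_left.eventually_mem hs).mono fun _ hu => h.B4_deriv_ne_zero hu ht)

lemma exists_eq_smul_wedge_add_of_lap_gaussMap (h : IsMinimalLorentzianSurface I₁ I₂ α β)
    (hs : s ∈ I₁) (ht : t ∈ I₂) (hη : wedge (eta1 α β s t) (eta2 α β s t) ≠ 0)
    {r : ℝ} {C : Fin 4 → Fin 4 → ℝ}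
    (hlap : lap α β (gaussMap α β) s t = r • (gaussMap α β s t + C)) :
    ∃ k l : ℝ, k ≠ 0 ∧
      C = k • wedge (eta1 α β s t) (eta2 α β s t) + l • wedge (deriv α s) (deriv β t) := by
  have hg := h.B4_deriv_ne_zero hs ht
  have hm := h.msq_ne_zero hs ht
  rw [lap, h.pds_pdt_gaussMap hs ht, gaussMap] at hlap
  set m := msq α β s t
  set κ := B4 (eta1 α β s t) (eta2 α β s t)
  have hsplit : (2 / m ^ 2) • wedge (eta1 α β s t) (eta2 α β s t) +
      (2 * κ / m ^ 3) • wedge (deriv α s) (deriv β t) =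
        r • ((1 / m) • wedge (deriv α s) (deriv β t) + C) := by
    rw [← hlap]
    match_scalars <;> field_simp
  have hr : r ≠ 0 := by
    rintro rfl
    -- The contraction with zero has `η₁` as an eigenvector, with eigenvalue `0`.
    refine hη (wedge_eq_zero_of_contraction_eq_smul (k := 2 / m ^ 2) (l := 2 * κ / m ^ 3) (μ := 0)
      (by positivity) (h.null_left s hs) (h.null_right t ht) hg
      (h.B4_eta1_deriv_left hs) (B4_eta1_deriv_right hg) ?_)
    rw [hsplit, zero_smul, zero_smul, map_zero, zero_apply]
  refine ⟨r⁻¹ * (2 / m ^ 2), r⁻¹ * (2 * κ / m ^ 3) - 1 / m, by positivity, ?_⟩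
  rw [sub_smul, mul_smul, mul_smul, ← add_sub_assoc, ← smul_add, hsplit, inv_smul_smul₀ hr,
    add_sub_cancel_left]

lemma wedge_eta_eq_zero_of_lap_gaussMap (h : IsMinimalLorentzianSurface I₁ I₂ α β)
    {f : ℝ → ℝ} {C : Fin 4 → Fin 4 → ℝ} (hs : s ∈ I₁) (ht : t ∈ I₂)
    (hlap : ∀ u ∈ I₁, lap α β (gaussMap α β) u t = f u • (gaussMap α β u t + C)) :
    wedge (eta1 α β s t) (eta2 α β s t) = 0 := by
  by_contra hη
  have hg := h.B4_deriv_ne_zero hs ht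
  have hxb := B4_eta1_deriv_right hg
  have heig : ∀ᶠ u in 𝓝 s, ∃ c : ℝ, contraction C (deriv α u) = c • deriv α u := by
    filter_upwards [h.isOpen_left.eventually_mem hs,
      (h.continuousAt_wedge_eta hs ht).eventually_ne hη] with u hu hηu
    obtain ⟨k, l, -, hCu⟩ := h.exists_eq_smul_wedge_add_of_lap_gaussMap hu ht hηu (hlap u hu)
    exact ⟨_, hCu ▸ contraction_wedge_add_wedge_of_null k l (h.null_left u hu)
      (h.B4_eta1_deriv_left hu) (h.B4_eta2_deriv_left hu ht)⟩
  obtain ⟨μ, hμ⟩ := heig.self_of_nhds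
  obtain ⟨k, l, hk, hC⟩ := h.exists_eq_smul_wedge_add_of_lap_gaussMap hs ht hη (hlap s hs)
  have horth : B4 (contraction C (eta1 α β s t)) (deriv β t) = 0 := by
    rw [hC, contraction_wedge_add_wedge_of_normal k l (h.B4_eta1_deriv_left hs) hxb,
      isBilinearMap_B4.smul_left, B4_sub_smul_left, isBilinearMap_B4.smul_left, hxb,
      h.B4_eta2_deriv_right ht]
    simp
  have hx : contraction C (eta1 α β s t) = μ • eta1 α β s t :=
    apply_eq_smul_of_eigendirections (h.differentiableAt_deriv_left hs).hasDerivAt heig hμ hg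
      hxb horth
  rw [hC] at hx
  exact hη (wedge_eq_zero_of_contraction_eq_smul hk (h.null_left s hs) (h.null_right t ht) hg
    (h.B4_eta1_deriv_left hs) hxb hx)

end IsMinimalLorentzianSurface

theorem pointwise_one_type_is_first_kind_general {I₁ I₂ : Set ℝ} {α β : ℝ → Fin 4 → ℝ}
    (h : IsMinimalLorentzianSurface I₁ I₂ α β) {f : ℝ → ℝ → ℝ} {C : Fin 4 → Fin 4 → ℝ}
    (hlap : ∀ s ∈ I₁, ∀ t ∈ I₂,
      lap α β (gaussMap α β) s t = f s t • (gaussMap α β s t + C)) :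
    (∀ s ∈ I₁, ∀ t ∈ I₂, wedge (eta1 α β s t) (eta2 α β s t) = 0) ∧
    (∀ s ∈ I₁, ∀ t ∈ I₂,
      ∃ c : ℝ, pds (pdt (gaussMap α β)) s t = c • gaussMap α β s t) := by
  have hη : ∀ s ∈ I₁, ∀ t ∈ I₂, wedge (eta1 α β s t) (eta2 α β s t) = 0 := fun s hs t ht =>
    h.wedge_eta_eq_zero_of_lap_gaussMap hs ht fun u hu => hlap u hu t ht
  refine ⟨hη, fun s hs t ht => ⟨B4 (eta1 α β s t) (eta2 α β s t) / msq α β s t, ?_⟩⟩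
  rw [h.pds_pdt_gaussMap hs ht, hη s hs t ht, smul_zero, zero_add]

/-- Proposition 3.3: if a minimal Lorentzian surface has pointwise 1-type Gauss map,
i.e. `Δν = f·(ν + C)` for a smooth function `f` and a constant bivector `C`, then
`η₁ ∧ η₂ ≡ 0` and `∂²ν/∂s∂t` is everywhere a scalar multiple of `ν`: the Gauss map
is of pointwise 1-type of the first kind (`C` may be taken to be `0`). -/
theorem pointwise_one_type_is_first_kind
    (I₁ I₂ : Set ℝ) (hI₁ : IsOpen I₁) (hI₂ : IsOpen I₂)
    (hI₁' : I₁.OrdConnected) (hI₂' : I₂.OrdConnected)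
    (α β : ℝ → Fin 4 → ℝ)
    (hα : ContDiffOn ℝ (⊤ : ℕ∞) α I₁) (hβ : ContDiffOn ℝ (⊤ : ℕ∞) β I₂)
    (hαnull : ∀ s ∈ I₁, B4 (deriv α s) (deriv α s) = 0)
    (hβnull : ∀ t ∈ I₂, B4 (deriv β t) (deriv β t) = 0)
    (hneg : ∀ s ∈ I₁, ∀ t ∈ I₂, B4 (deriv α s) (deriv β t) < 0)
    (f : ℝ → ℝ → ℝ) (hf : ContDiffOn ℝ (⊤ : ℕ∞) (Function.uncurry f) (I₁ ×ˢ I₂))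
    (C : Fin 4 → Fin 4 → ℝ) (hC : ∀ i j, C i j = -C j i)
    (hmain : ∀ s ∈ I₁, ∀ t ∈ I₂,
      lap α β (gaussMap α β) s t = f s t • (gaussMap α β s t + C)) :
    (∀ s ∈ I₁, ∀ t ∈ I₂, wedge (eta1 α β s t) (eta2 α β s t) = 0) ∧
    (∀ s ∈ I₁, ∀ t ∈ I₂,
      ∃ c : ℝ, pds (pdt (gaussMap α β)) s t = c • gaussMap α β s t) :=
  pointwise_one_type_is_first_kind_general
    ⟨hI₁, hI₂, hα.of_le (by norm_cast), hβ.of_le (by norm_cast), hαnull, hβnull, hneg⟩ hmain
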